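/- arXiv:math/0601334 — 2 statements merged into one kernel-verified Lean document; each statement's English description precedes it below -/
import Mathlib

section
/- Let d ≥ 1 be an integer, let d_1,…,d_d be positive integers, let K be a field and let σ ∈ K satisfy σ ≠ 0 and σ^{d_i} ≠ 1 for all i. Then for every 0 ≤ p ≤ d−1 the following duality relation between absolute and relative coexact generating functions holds: g_a(p, σ^{−1}) − (−1)^d σ^{d+1} · g_r(p, σ) = (−1)^{p+1} σ^{p+1}. -/
open Finset

lemma esymm_inv_aux {K : Type*} [Field K] (d : ℕ) (x : Fin d → K) (hx : ∀ i, x i ≠ 0)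
    (q : ℕ) (hq : q ≤ d) :
    (∑ t ∈ powersetCard (d - q) (univ : Finset (Fin d)), ∏ i ∈ t, (x i)⁻¹) =
      (∑ t ∈ powersetCard q (univ : Finset (Fin d)), ∏ i ∈ t, x i) / ∏ i, x i := by
  rw [Finset.sum_div]
  refine Finset.sum_nbij' (fun t => tᶜ) (fun t => tᶜ) ?_ ?_ ?_ ?_ ?_
  · intro t ht
    simp only [mem_powersetCard_univ, card_compl, Fintype.card_fin] at ht ⊢
    omega
  · intro t ht
    simp only [mem_powersetCard_univ, card_compl, Fintype.card_fin] at ht ⊢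
    omega
  · intro t _
    simp
  · intro t _
    simp
  · intro t _
    have h := Finset.prod_mul_prod_compl t x
    have h1 : ∏ i ∈ t, x i ≠ 0 := Finset.prod_ne_zero_iff.mpr fun i _ => hx i
    have h2 : ∏ i ∈ tᶜ, x i ≠ 0 := Finset.prod_ne_zero_iff.mpr fun i _ => hx i
    rw [← h, Finset.prod_inv_distrib]
    field_simp

lemma prod_one_sub_aux {K : Type*} [Field K] (d : ℕ) (x : Fin d → K) :
    ∏ i, (1 - x i) = ∑ q ∈ range (d + 1), (-1 : K) ^ q *
      ∑ t ∈ powersetCard q (univ : Finset (Fin d)), ∏ i ∈ t, x i := by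
  simp only [sub_eq_add_neg]
  rw [Finset.prod_one_add, Finset.sum_powerset, card_univ, Fintype.card_fin]
  refine Finset.sum_congr rfl fun q _ => ?_
  rw [Finset.mul_sum]
  refine Finset.sum_congr rfl fun t ht => ?_
  rw [Finset.prod_neg, (mem_powersetCard.mp ht).2]

/-- the duality relation
`g_a(p, σ⁻¹) − (−1)^d σ^(d+1) g_r(p, σ) = (−1)^(p+1) σ^(p+1)`. -/
theorem absolute_relative_duality
    (d : ℕ) (hd : 1 ≤ d) (dd : Fin d → ℕ) (hdd : ∀ i, 0 < dd i)
    (K : Type*) [Field K] (σ : K) (hσ : σ ≠ 0)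
    (hσd : ∀ i, σ ^ dd i ≠ 1) (p : ℕ) (hp : p ≤ d - 1) :
    (-1 : K) ^ (d + 1 + p) *
        (∑ q ∈ range (d - p), (-1 : K) ^ q *
          ∑ t ∈ powersetCard (d - q) (univ : Finset (Fin d)), ∏ i ∈ t, σ⁻¹ ^ dd i) /
      (σ⁻¹ ^ (p + 1) * ∏ i, (1 - σ⁻¹ ^ dd i)) -
    (-1 : K) ^ d * σ ^ (d + 1) *
      ((-1 : K) ^ p *
          (∑ q ∈ range (p + 1), (-1 : K) ^ q *
            ∑ t ∈ powersetCard (d - q) (univ : Finset (Fin d)), ∏ i ∈ t, σ ^ dd i) /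
        (σ ^ (d - p) * ∏ i, (1 - σ ^ dd i))) =
    (-1 : K) ^ (p + 1) * σ ^ (p + 1) := by
  have hx : ∀ i, σ ^ dd i ≠ 0 := fun i => pow_ne_zero _ hσ
  have hP : ∏ i, σ ^ dd i ≠ 0 := Finset.prod_ne_zero_iff.mpr fun i _ => hx i
  have hD : ∏ i, (1 - σ ^ dd i) ≠ 0 :=
    Finset.prod_ne_zero_iff.mpr fun i _ => sub_ne_zero.mpr (hσd i).symm
  have hinv : ∏ i, (1 - σ⁻¹ ^ dd i) = (-1) ^ d * (∏ i, (1 - σ ^ dd i)) / ∏ i, σ ^ dd i := by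
    have h1 : ∀ i, 1 - σ⁻¹ ^ dd i = (-(1 - σ ^ dd i)) / σ ^ dd i := by
      intro i
      have := hx i
      rw [inv_pow]
      field_simp
      ring
    rw [Finset.prod_congr rfl fun i _ => h1 i, Finset.prod_div_distrib, Finset.prod_neg,
      card_univ, Fintype.card_fin]
  have hS := prod_one_sub_aux d (fun i => σ ^ dd i)
  have hA : (∑ q ∈ range (d - p), (-1 : K) ^ q *
          ∑ t ∈ powersetCard (d - q) (univ : Finset (Fin d)), ∏ i ∈ t, σ⁻¹ ^ dd i) =
      (∑ q ∈ range (d - p), (-1 : K) ^ q *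
          ∑ t ∈ powersetCard q (univ : Finset (Fin d)), ∏ i ∈ t, σ ^ dd i) /
        ∏ i, σ ^ dd i := by
    rw [Finset.sum_div]
    refine Finset.sum_congr rfl fun q hq => ?_
    have hq' := mem_range.mp hq
    simp only [inv_pow]
    rw [esymm_inv_aux d (fun i => σ ^ dd i) hx q (by omega), mul_div_assoc]
  have hsq : ∀ n : ℕ, ((-1 : K) ^ n) * (-1) ^ n = 1 := fun n => by
    rw [← mul_pow]; simp
  have hB : ∏ i, (1 - σ ^ dd i) = (∑ q ∈ range (d - p), (-1 : K) ^ q *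
          ∑ t ∈ powersetCard q (univ : Finset (Fin d)), ∏ i ∈ t, σ ^ dd i) +
      (-1) ^ d * (∑ q ∈ range (p + 1), (-1 : K) ^ q *
          ∑ t ∈ powersetCard (d - q) (univ : Finset (Fin d)), ∏ i ∈ t, σ ^ dd i) := by
    rw [hS, show d + 1 = (d - p) + (p + 1) by omega, Finset.sum_range_add]
    congr 1
    rw [← Finset.sum_range_reflect, Finset.mul_sum]
    refine Finset.sum_congr rfl fun q hq => ?_
    have hq' := mem_range.mp hq
    rw [show d - p + (p + 1 - 1 - q) = d - q by omega, ← mul_assoc]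
    congr 1
    have h3 : (-1 : K) ^ d = (-1) ^ (d - q) * (-1) ^ q := by
      rw [← pow_add]; congr 1; omega
    rw [h3, mul_assoc, hsq, mul_one]
  have hpow : σ ^ (d + 1) = σ ^ (d - p) * σ ^ (p + 1) := by
    rw [← pow_add]; congr 1; omega
  rw [hA, hinv, hpow, inv_pow]
  generalize (∑ q ∈ range (d - p), (-1 : K) ^ q *
          ∑ t ∈ powersetCard q (univ : Finset (Fin d)), ∏ i ∈ t, σ ^ dd i) = A at *
  generalize (∑ q ∈ range (p + 1), (-1 : K) ^ q *
          ∑ t ∈ powersetCard (d - q) (univ : Finset (Fin d)), ∏ i ∈ t, σ ^ dd i) = B at *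
  generalize ∏ i, (1 - σ ^ dd i) = D at *
  generalize ∏ i, σ ^ dd i = P at *
  have hs := hsq d
  have hσ1 : σ ^ (p + 1) ≠ 0 := pow_ne_zero _ hσ
  have hσ2 : σ ^ (d - p) ≠ 0 := pow_ne_zero _ hσ
  have he : (-1 : K) ^ d ≠ 0 := by simp
  rw [show d + 1 + p = d + (p + 1) by omega, pow_add (-1 : K) d (p + 1), pow_succ (-1 : K) p]
  generalize σ ^ (p + 1) = s at *
  generalize σ ^ (d - p) = r at *
  generalize (-1 : K) ^ d = e at *
  generalize (-1 : K) ^ p = f at *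
  have h1 : e * (f * -1) * (A / P) / (s⁻¹ * (e * D / P)) = -(f * s * A) / D := by
    field_simp
  have h2 : e * (r * s) * (f * B / (r * D)) = e * s * f * B / D := by
    field_simp
  rw [h1, h2, ← sub_div, div_eq_iff hD, hB]
  ring
end

section
/- Let d ≥ 1 be an odd integer, set p = (d−1)/2 (the middle form rank), let d_1,…,d_d be positive integers, let K be a field and let σ ∈ K satisfy σ ≠ 0 and σ^{d_i} ≠ 1 for all i. Then the middle-rank coexact generating function is self-dual, g_a(p,σ) = g_r(p,σ), and its symmetrised cylinder-kernel combination is constant: g_a(p, σ^{−1}) + σ^{d+1} · g_a(p, σ) = (−1)^{p+1} σ^{p+1}. -/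
open Finset

theorem aux_prod {K : Type*} [Field K] (p : ℕ) (x : Fin (2 * p + 1) → K) :
    ∏ i, (1 - x i) =
      ∑ q ∈ range (p + 1), (-1 : K) ^ q *
        ∑ t ∈ powersetCard q (univ : Finset (Fin (2 * p + 1))), ∏ i ∈ t, x i -
      ∑ q ∈ range (p + 1), (-1 : K) ^ q *
        ∑ t ∈ powersetCard (2 * p + 1 - q) (univ : Finset (Fin (2 * p + 1))), ∏ i ∈ t, x i := by
  have h1 : ∏ i, (1 - x i) = ∑ q ∈ range ((p + 1) + (p + 1)), (-1 : K) ^ q *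
        ∑ t ∈ powersetCard q (univ : Finset (Fin (2 * p + 1))), ∏ i ∈ t, x i := by
    simp_rw [sub_eq_add_neg]
    rw [Finset.prod_one_add, Finset.sum_powerset, Finset.card_univ, Fintype.card_fin]
    rw [show 2 * p + 1 + 1 = (p + 1) + (p + 1) by ring]
    refine Finset.sum_congr rfl fun q _ => ?_
    rw [Finset.mul_sum]
    refine Finset.sum_congr rfl fun t ht => ?_
    rw [Finset.prod_neg, (Finset.mem_powersetCard.1 ht).2]
  rw [h1, Finset.sum_range_add, sub_eq_add_neg, ← Finset.sum_neg_distrib]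
  congr 1
  rw [← Finset.sum_range_reflect]
  refine Finset.sum_congr rfl fun q hq => ?_
  have hq' : q ≤ p := by have := Finset.mem_range.1 hq; omega
  obtain ⟨r, rfl⟩ := Nat.exists_eq_add_of_le hq'
  rw [show q + r + 1 + (q + r + 1 - 1 - q) = 2 * (q + r) + 1 - q by omega,
    show (-1 : K) ^ (2 * (q + r) + 1 - q) = - (-1) ^ q by
      rw [show 2 * (q + r) + 1 - q = 2 * r + 1 + q by omega, pow_add, pow_succ, pow_mul]
      simp]
  ring

theorem aux_inv {K : Type*} [Field K] (d q : ℕ) (hq : q ≤ d) (x : Fin d → K)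
    (hx : ∀ i, x i ≠ 0) :
    ∑ t ∈ powersetCard (d - q) (univ : Finset (Fin d)), ∏ i ∈ t, (x i)⁻¹ =
      (∑ t ∈ powersetCard q (univ : Finset (Fin d)), ∏ i ∈ t, x i) / ∏ i, x i := by
  rw [Finset.sum_div]
  refine Finset.sum_nbij' (fun t => tᶜ) (fun t => tᶜ) ?_ ?_ ?_ ?_ ?_
  · intro t ht
    have := (Finset.mem_powersetCard.1 ht).2
    simp [Finset.mem_powersetCard, Finset.card_compl, this]
    omega
  · intro t ht
    have := (Finset.mem_powersetCard.1 ht).2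
    simp [Finset.mem_powersetCard, Finset.card_compl, this]
  · intro t _
    simp
  · intro t _
    simp
  · intro t _
    have h0 : ∏ i ∈ tᶜ, x i ≠ 0 := Finset.prod_ne_zero_iff.2 fun i _ => hx i
    have h1 : ∏ i ∈ t, x i ≠ 0 := Finset.prod_ne_zero_iff.2 fun i _ => hx i
    rw [← Finset.prod_mul_prod_compl t x, Finset.prod_inv_distrib]
    field_simp

/-- for odd `d = 2p+1` (middle form rank `p = (d-1)/2`) the coexact
generating function is self-dual, `g_a(p,σ) = g_r(p,σ)`, and satisfies
`g_a(p,σ⁻¹) + σ^(d+1) g_a(p,σ) = (−1)^(p+1) σ^(p+1)`. -/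
theorem middle_rank_self_duality
    (d : ℕ) (hd : 1 ≤ d) (hodd : Odd d) (p : ℕ) (hp : d = 2 * p + 1)
    (dd : Fin d → ℕ) (hdd : ∀ i, 0 < dd i)
    (K : Type*) [Field K] (σ : K) (hσ : σ ≠ 0) (hσd : ∀ i, σ ^ dd i ≠ 1) :
    ((-1 : K) ^ (d + 1 + p) *
        (∑ q ∈ range (d - p), (-1 : K) ^ q *
          ∑ t ∈ powersetCard (d - q) (univ : Finset (Fin d)), ∏ i ∈ t, σ ^ dd i) /
      (σ ^ (p + 1) * ∏ i, (1 - σ ^ dd i)) =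
      (-1 : K) ^ p *
        (∑ q ∈ range (p + 1), (-1 : K) ^ q *
          ∑ t ∈ powersetCard (d - q) (univ : Finset (Fin d)), ∏ i ∈ t, σ ^ dd i) /
      (σ ^ (d - p) * ∏ i, (1 - σ ^ dd i))) ∧
    ((-1 : K) ^ (d + 1 + p) *
        (∑ q ∈ range (d - p), (-1 : K) ^ q *
          ∑ t ∈ powersetCard (d - q) (univ : Finset (Fin d)), ∏ i ∈ t, σ⁻¹ ^ dd i) /
      (σ⁻¹ ^ (p + 1) * ∏ i, (1 - σ⁻¹ ^ dd i)) +
      σ ^ (d + 1) *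
        ((-1 : K) ^ (d + 1 + p) *
            (∑ q ∈ range (d - p), (-1 : K) ^ q *
              ∑ t ∈ powersetCard (d - q) (univ : Finset (Fin d)), ∏ i ∈ t, σ ^ dd i) /
          (σ ^ (p + 1) * ∏ i, (1 - σ ^ dd i))) =
      (-1 : K) ^ (p + 1) * σ ^ (p + 1)) := by
  subst hp
  have e1 : 2 * p + 1 - p = p + 1 := by omega
  have sg : (-1 : K) ^ (2 * p + 1 + 1 + p) = (-1) ^ p := by
    rw [show 2 * p + 1 + 1 + p = 2 * (p + 1) + p by ring, pow_add, pow_mul]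
    simp
  rw [e1, sg]
  refine ⟨rfl, ?_⟩
  have hx : ∀ i, σ ^ dd i ≠ 0 := fun i => pow_ne_zero _ hσ
  have hD0 : ∏ i, (1 - σ ^ dd i) ≠ 0 :=
    Finset.prod_ne_zero_iff.2 fun i _ => sub_ne_zero.2 (hσd i).symm
  have hP0 : ∏ i, σ ^ dd i ≠ 0 := Finset.prod_ne_zero_iff.2 fun i _ => hx i
  have hD := aux_prod p (fun i => σ ^ dd i)
  have hinv : ∏ i, (1 - σ⁻¹ ^ dd i) = - (∏ i, (1 - σ ^ dd i)) / ∏ i, σ ^ dd i := by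
    have : ∀ i, 1 - σ⁻¹ ^ dd i = (-(1 - σ ^ dd i)) / σ ^ dd i := by
      intro i
      have := hx i
      rw [inv_pow]
      field_simp
      ring
    simp_rw [this]
    rw [Finset.prod_div_distrib, Finset.prod_neg, Finset.card_univ, Fintype.card_fin,
      pow_succ, pow_mul]
    simp
  have hN : ∑ q ∈ range (p + 1), (-1 : K) ^ q *
          ∑ t ∈ powersetCard (2 * p + 1 - q) (univ : Finset (Fin (2 * p + 1))),
            ∏ i ∈ t, σ⁻¹ ^ dd i =
      (∑ q ∈ range (p + 1), (-1 : K) ^ q *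
        ∑ t ∈ powersetCard q (univ : Finset (Fin (2 * p + 1))), ∏ i ∈ t, σ ^ dd i) /
        ∏ i, σ ^ dd i := by
    rw [Finset.sum_div]
    refine Finset.sum_congr rfl fun q hq => ?_
    have hq' : q ≤ 2 * p + 1 := by have := Finset.mem_range.1 hq; omega
    have := aux_inv (2 * p + 1) q hq' (fun i => σ ^ dd i) hx
    simp only [inv_pow]
    rw [this, mul_div_assoc]
  rw [hN, hinv]
  generalize (∑ q ∈ range (p + 1), (-1 : K) ^ q *
        ∑ t ∈ powersetCard q (univ : Finset (Fin (2 * p + 1))), ∏ i ∈ t, σ ^ dd i) = M at *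
  generalize (∑ q ∈ range (p + 1), (-1 : K) ^ q *
        ∑ t ∈ powersetCard (2 * p + 1 - q) (univ : Finset (Fin (2 * p + 1))),
          ∏ i ∈ t, σ ^ dd i) = N at *
  generalize ∏ i, (1 - σ ^ dd i) = D at *
  generalize ∏ i, σ ^ dd i = P at *
  have hM : M = D + N := by rw [hD]; ring
  rw [hM, show 2 * p + 1 + 1 = (p + 1) + (p + 1) by ring, pow_add σ (p + 1), inv_pow,
    pow_succ (-1 : K)]
  have hs : σ ^ (p + 1) ≠ 0 := pow_ne_zero _ hσ
  generalize σ ^ (p + 1) = s at *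
  clear hD hM
  field_simp
  ring
end
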